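/- Let d₁, d₂, d₃ ≥ 1, N = d₁+d₂+d₃, and let T : ℝ^N → ℝ^N be an invertible linear map with T(ℝ^{d₁} × {0} × {0}) = ℝ^{d₁} × {0} × {0} and T(ℝ^{d₁} × ℝ^{d₂} × {0}) = ℝ^{d₁} × ℝ^{d₂} × {0}. Let n ≥ 1 and M₁, M₂, M₃ ∈ ℝ, and suppose a : ℝⁿ × ℝ^N → ℂ is smooth and satisfies, for all multi-indices α, β, η, γ, |∂_x^γ ∂_{ξ′}^α ∂_{ξ″}^β ∂_{ξ‴}^η a(x, ξ′, ξ″, ξ‴)| ≤ C ⟨(ξ′,ξ″,ξ‴)⟩^{M₁−|α|} ⟨(ξ″,ξ‴)⟩^{M₂−|β|} ⟨ξ‴⟩^{M₃−|η|} for all arguments, where ξ = (ξ′,ξ″,ξ‴) ∈ ℝ^{d₁} × ℝ^{d₂} × ℝ^{d₃} and ⟨·⟩ := (1+|·|²)^{1/2}. Then the function (x,ξ) ↦ a(x, Tξ) satisfies estimates of the same form, with the same orders M₁, M₂, M₃ and new constants. -/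

import Mathlib

set_option synthInstance.maxHeartbeats 1000000
set_option maxHeartbeats 1000000

/-- The Japanese bracket `⟨v⟩ = (1 + |v|²)^{1/2}`. -/
noncomputable def jap {d : ℕ} (v : EuclideanSpace ℝ (Fin d)) : ℝ :=
  Real.sqrt (1 + ‖v‖ ^ 2)

/-- The Japanese bracket of a pair. -/
noncomputable def jap2 {d e : ℕ} (u : EuclideanSpace ℝ (Fin d))
    (v : EuclideanSpace ℝ (Fin e)) : ℝ :=
  Real.sqrt (1 + ‖u‖ ^ 2 + ‖v‖ ^ 2)

/-- The Japanese bracket of a triple. -/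
noncomputable def jap3 {d e f : ℕ} (u : EuclideanSpace ℝ (Fin d))
    (v : EuclideanSpace ℝ (Fin e)) (w : EuclideanSpace ℝ (Fin f)) : ℝ :=
  Real.sqrt (1 + ‖u‖ ^ 2 + ‖v‖ ^ 2 + ‖w‖ ^ 2)

/-! The estimates say that `a` lies in Hörmander's class `S(m, g)`, with the weight
`m = ⟨(ξ', ξ'', ξ''')⟩ ^ M₁ ⟨(ξ'', ξ''')⟩ ^ M₂ ⟨ξ'''⟩ ^ M₃` and with directions measured by
`g = max (‖v_x‖, ‖v'‖ / ⟨(ξ', ξ'', ξ''')⟩, ‖v''‖ / ⟨(ξ'', ξ''')⟩, ‖v'''‖ / ⟨ξ'''⟩)`: directional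
derivatives commute and are linear in the direction, and projecting a direction to one of the four
factors does not increase `g`, so the estimates along arbitrary directions follow from those along
the factors. A change of frequencies preserving the flag acts on the quotients by the flag
subspaces. Hence it changes each bracket, and so also `m` and `g`, at most by a constant factor, and
composition with it preserves `S(m, g)`. -/

open scoped ContDiff

namespace TripleSymbol

section DirectionalDerivatives

variable {E F V : Type*} [NormedAddCommGroup E] [NormedSpace ℝ E]
  [NormedAddCommGroup F] [NormedSpace ℝ F] [NormedAddCommGroup V] [NormedSpace ℝ V]

/-- The iterated directional derivative `∂_{v₁} ⋯ ∂_{vₖ} h` along a list of directions, the head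
of the list being differentiated last. -/
noncomputable def listFDeriv : List E → (E → F) → E → F
  | [], h => h
  | v :: l, h => fun p => fderiv ℝ (listFDeriv l h) p v

variable {h : E → F}

lemma contDiff_listFDeriv (hh : ContDiff ℝ ∞ h) (l : List E) :
    ContDiff ℝ ∞ (listFDeriv l h) := by
  induction l with
  | nil => exact hh
  | cons v l ih => exact (ih.fderiv_right (m := ∞) (by simp)).clm_apply contDiff_const

lemma differentiable_listFDeriv (hh : ContDiff ℝ ∞ h) (l : List E) :
    Differentiable ℝ (listFDeriv l h) :=
  (contDiff_listFDeriv hh l).differentiable (by simp)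

lemma listFDeriv_append (l l' : List E) (h : E → F) :
    listFDeriv (l ++ l') h = listFDeriv l (listFDeriv l' h) := by
  induction l with
  | nil => rfl
  | cons v l ih => simp only [List.cons_append, listFDeriv, ih]

lemma listFDeriv_sum_cons {J : Type*} (s : Finset J) (w : J → E) (l : List E) (h : E → F) (p : E) :
    listFDeriv ((∑ j ∈ s, w j) :: l) h p = ∑ j ∈ s, listFDeriv (w j :: l) h p :=
  map_sum (fderiv ℝ (listFDeriv l h) p) w s

lemma listFDeriv_comp_continuousLinearMap {h : V → F} (hh : ContDiff ℝ ∞ h) (S : E →L[ℝ] V)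
    (l : List E) (p : E) :
    listFDeriv l (fun q => h (S q)) p = listFDeriv (l.map S) h (S p) := by
  induction l generalizing p with
  | nil => rfl
  | cons v l ih =>
    have chain := (differentiable_listFDeriv hh (l.map S) (S p)).hasFDerivAt.comp p S.hasFDerivAt
    simp only [List.map_cons, listFDeriv]
    rw [funext ih]
    exact congrArg (· v) chain.fderiv

lemma listFDeriv_swap (hh : ContDiff ℝ ∞ h) (v w : E) (l : List E) :
    listFDeriv (v :: w :: l) h = listFDeriv (w :: v :: l) h := by
  funext p
  have hl := contDiff_listFDeriv hh l
  have hd : DifferentiableAt ℝ (fderiv ℝ (listFDeriv l h)) p :=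
    (hl.fderiv_right (m := ∞) (by simp)).differentiable (by simp) p
  have second_derivative (v w : E) : listFDeriv (v :: w :: l) h p =
      fderiv ℝ (fderiv ℝ (listFDeriv l h)) p v w := by
    simp [listFDeriv, fderiv_clm_apply hd (differentiableAt_const w)]
  have two_le : minSmoothness ℝ 2 ≤ ∞ := by
    rw [minSmoothness_of_isRCLikeNormedField]
    exact WithTop.coe_le_coe.2 (le_top (a := (2 : ℕ∞)))
  have symmetric : IsSymmSndFDerivAt ℝ (listFDeriv l h) p :=
    hl.contDiffAt.isSymmSndFDerivAt two_le
  rw [second_derivative, second_derivative, symmetric.eq]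

lemma listFDeriv_eq_of_perm (hh : ContDiff ℝ ∞ h) {l l' : List E} (hl : l.Perm l') :
    listFDeriv l h = listFDeriv l' h := by
  induction hl with
  | nil => rfl
  | cons v _ ih => simp only [listFDeriv, ih]
  | swap v w l => exact listFDeriv_swap hh w v l
  | trans _ _ ih ih' => exact ih.trans ih'

lemma iteratedFDeriv_apply_eq_listFDeriv (hh : ContDiff ℝ ∞ h) (k : ℕ) (p : E) (m : Fin k → E) :
    iteratedFDeriv ℝ k h p m = listFDeriv (List.ofFn m) h p := by
  induction k generalizing p with
  | zero => simp [listFDeriv]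
  | succ k ih =>
    have hd : DifferentiableAt ℝ (iteratedFDeriv ℝ k h) p :=
      hh.differentiable_iteratedFDeriv (by exact_mod_cast ENat.natCast_lt_top k) p
    rw [hd.iteratedFDeriv_succ_apply_left', List.ofFn_succ, listFDeriv, funext fun q => ih q _]
    rfl

/-- The `k`-th partial derivative of `h` in the directions of the subspace parametrised by `ι`. -/
noncomputable def partialFDeriv (ι : V →L[ℝ] E) (k : ℕ) (h : E → F) (p : E) :
    V [×k]→L[ℝ] F :=
  (iteratedFDeriv ℝ k h p).compContinuousLinearMap fun _ => ι

lemma contDiff_partialFDeriv (hh : ContDiff ℝ ∞ h) (ι : V →L[ℝ] E) (k : ℕ) :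
    ContDiff ℝ ∞ (partialFDeriv ι k h) :=
  (ContinuousMultilinearMap.compContinuousLinearMapL (F := F) fun _ : Fin k => ι).contDiff.comp
    (hh.iteratedFDeriv_right (by exact_mod_cast le_top))

lemma iteratedFDeriv_comp_add_eq_partialFDeriv (hh : ContDiff ℝ ∞ h) (ι : V →L[ℝ] E) (k : ℕ)
    (c : E) (v : V) :
    iteratedFDeriv ℝ k (fun w => h (c + ι w)) v = partialFDeriv ι k h (c + ι v) := by
  have shifted : ContDiff ℝ ∞ fun q => h (c + q) := hh.comp (contDiff_const.add contDiff_id)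
  refine (ι.iteratedFDeriv_comp_right shifted v (i := k) (by exact_mod_cast le_top)).trans ?_
  rw [iteratedFDeriv_comp_add_left]
  rfl

lemma listFDeriv_partialFDeriv_apply (hh : ContDiff ℝ ∞ h) (ι : V →L[ℝ] E) (k : ℕ) (l : List E)
    (p : E) (m : Fin k → V) :
    listFDeriv l (partialFDeriv ι k h) p m =
      listFDeriv (l ++ List.ofFn fun i => ι (m i)) h p := by
  rw [listFDeriv_append]
  induction l generalizing p with
  | nil => exact iteratedFDeriv_apply_eq_listFDeriv hh k p fun i => ι (m i)
  | cons v l ih =>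
    have hd := differentiable_listFDeriv (contDiff_partialFDeriv hh ι k) l p
    rw [listFDeriv, listFDeriv, ← funext ih]
    exact (fderiv_continuousMultilinear_apply_const_apply hd m v).symm

end DirectionalDerivatives

section WeightedEstimates

variable {E F : Type*} [NormedAddCommGroup E] [NormedSpace ℝ E]
  [NormedAddCommGroup F] [NormedSpace ℝ F]

/-- The estimates `|∂_{v₁} ⋯ ∂_{vₖ} h (p)| ≤ C m(p) g_p(v₁) ⋯ g_p(vₖ)`, uniformly in the point `p`
and in the lists of directions belonging to `𝓛`. Hörmander's symbol class `S(m, g)` asks for them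
along all lists of length `k`, for every `k`. -/
def BoundedAlong (g : E → E → ℝ) (m : E → ℝ) (h : E → F) (𝓛 : Set (List E)) : Prop :=
  ∃ C, 0 ≤ C ∧ ∀ l ∈ 𝓛, ∀ p, ‖listFDeriv l h p‖ ≤ C * m p * (l.map (g p)).prod

variable {g : E → E → ℝ} {m : E → ℝ} {h : E → F}

lemma BoundedAlong.mono {𝓛 𝓛' : Set (List E)} (h𝓛 : 𝓛' ⊆ 𝓛) (H : BoundedAlong g m h 𝓛) :
    BoundedAlong g m h 𝓛' :=
  let ⟨C, hC, bound⟩ := H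
  ⟨C, hC, fun l hl => bound l (h𝓛 hl)⟩

lemma BoundedAlong.comp_continuousLinearMap {V : Type*} [NormedAddCommGroup V] [NormedSpace ℝ V]
    {g' : V → V → ℝ} {m' : V → ℝ} {h : V → F} (hh : ContDiff ℝ ∞ h)
    (hm' : ∀ q, 0 ≤ m' q) (hg' : ∀ q w, 0 ≤ g' q w)
    {S : E →L[ℝ] V} {A B : ℝ} (hA : 0 ≤ A) (hB : 0 ≤ B) (hm : ∀ p, m' (S p) ≤ A * m p)
    (hg : ∀ p v, g' (S p) (S v) ≤ B * g p v) {k : ℕ}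
    (H : BoundedAlong g' m' h {l | l.length = k}) :
    BoundedAlong g m (fun p => h (S p)) {l | l.length = k} := by
  obtain ⟨C, hC, bound⟩ := H
  refine ⟨C * A * B ^ k, by positivity, fun l hl p => ?_⟩
  have prod_le : ((l.map S).map (g' (S p))).prod ≤ B ^ k * (l.map (g p)).prod := by
    calc ((l.map S).map (g' (S p))).prod = (l.map fun v => g' (S p) (S v)).prod := by
          rw [List.map_map]; rfl
      _ ≤ (l.map fun v => B * g p v).prod :=
          List.prod_map_le_prod_map₀ _ _ (fun v _ => hg' _ _) fun v _ => hg p v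
      _ = B ^ k * (l.map (g p)).prod := by
          rw [List.prod_map_mul, List.map_const', List.prod_replicate, hl]
  calc ‖listFDeriv l (fun p => h (S p)) p‖
      = ‖listFDeriv (l.map S) h (S p)‖ := by rw [listFDeriv_comp_continuousLinearMap hh]
    _ ≤ C * m' (S p) * ((l.map S).map (g' (S p))).prod := bound _ (by simpa using hl) _
    _ ≤ C * (A * m p) * (B ^ k * (l.map (g p)).prod) := by
        have prod_nonneg : 0 ≤ ((l.map S).map (g' (S p))).prod :=
          List.prod_nonneg (by simp [hg'])
        gcongr
        · exact mul_nonneg hC ((hm' _).trans (hm p))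
        · exact hm p
    _ = C * A * B ^ k * m p * (l.map (g p)).prod := by ring

lemma BoundedAlong.sum_cons {J : Type*} [Fintype J] (hm : ∀ p, 0 ≤ m p) (hg : ∀ p v, 0 ≤ g p v)
    {P : J → E → E} (hP : ∀ v, ∑ j, P j v = v) (hgP : ∀ p j v, g p (P j v) ≤ g p v)
    {𝓛 : Set (List E)} (H : ∀ j, BoundedAlong g m h {L | ∃ v, ∃ l ∈ 𝓛, L = P j v :: l}) :
    BoundedAlong g m h {L | ∃ v, ∃ l ∈ 𝓛, L = v :: l} := by
  choose C hC bound using H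
  refine ⟨∑ j, C j, Finset.sum_nonneg fun j _ => hC j, ?_⟩
  rintro _ ⟨v, l, hl, rfl⟩ p
  calc ‖listFDeriv (v :: l) h p‖ = ‖∑ j, listFDeriv (P j v :: l) h p‖ := by
        rw [← listFDeriv_sum_cons, hP]
    _ ≤ ∑ j, C j * m p * ((v :: l).map (g p)).prod := norm_sum_le_of_le _ fun j _ => ?_
    _ = (∑ j, C j) * m p * ((v :: l).map (g p)).prod := by simp only [Finset.sum_mul]
  refine (bound j _ ⟨v, l, hl, rfl⟩ p).trans ?_
  have hCj := hC j
  have hmp := hm p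
  have prod_nonneg : 0 ≤ (l.map (g p)).prod := List.prod_nonneg (by simp [hg])
  simp only [List.map_cons, List.prod_cons]
  gcongr
  exact hgP p j v

/-- Splitting off the first direction, it can be moved behind the remaining ones because
derivatives commute; this is what makes the induction on the number of directions run. -/
lemma BoundedAlong.of_components {J : Type*} [Fintype J] (hh : ContDiff ℝ ∞ h)
    (hm : ∀ p, 0 ≤ m p) (hg : ∀ p v, 0 ≤ g p v)
    {P : J → E → E} (hP : ∀ v, ∑ j, P j v = v) (hgP : ∀ p j v, g p (P j v) ≤ g p v)
    {I : Type*} {𝓑 : I → Set (List E)}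
    (hcons : ∀ i j, ∃ i', ∀ L ∈ 𝓑 i, ∀ v, P j v :: L ∈ 𝓑 i')
    (H : ∀ i, BoundedAlong g m h (𝓑 i)) (k : ℕ) (i : I) :
    BoundedAlong g m h {L | ∃ l, l.length = k ∧ ∃ b ∈ 𝓑 i, L = l ++ b} := by
  induction k generalizing i with
  | zero =>
    refine (H i).mono ?_
    rintro _ ⟨l, hl, b, hb, rfl⟩
    rwa [List.eq_nil_of_length_eq_zero hl]
  | succ k ih =>
    have homogeneous_cons (j : J) : BoundedAlong g m h
        {L | ∃ v, ∃ l ∈ {L | ∃ l, l.length = k ∧ ∃ b ∈ 𝓑 i, L = l ++ b}, L = P j v :: l} := by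
      obtain ⟨i', hi'⟩ := hcons i j
      obtain ⟨C, hC, bound⟩ := ih i'
      refine ⟨C, hC, ?_⟩
      rintro _ ⟨v, _, ⟨l, hl, b, hb, rfl⟩, rfl⟩ p
      have move : (l ++ P j v :: b).Perm (P j v :: (l ++ b)) := List.perm_middle
      rw [← listFDeriv_eq_of_perm hh move, ← (move.map (g p)).prod_eq]
      exact bound _ ⟨l, hl, _, hi' b hb v, rfl⟩ p
    refine (BoundedAlong.sum_cons hm hg hP hgP homogeneous_cons).mono ?_
    rintro _ ⟨l, hl, b, hb, rfl⟩
    obtain ⟨v, l, rfl⟩ := List.exists_cons_of_length_eq_add_one hl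
    exact ⟨v, l ++ b, ⟨l, by simpa using hl, b, hb, rfl⟩, rfl⟩

end WeightedEstimates

/-- The space of all `(x, ξ', ξ'', ξ''')`. -/
abbrev Phase (X V₁ V₂ V₃ : Type*) := X × V₁ × V₂ × V₃

section Components

variable {X V₁ V₂ V₃ : Type*}
  [AddCommMonoid X] [AddCommMonoid V₁] [AddCommMonoid V₂] [AddCommMonoid V₃]

/-- The projections onto the four factors, seen as maps of the whole space. -/
def component : Fin 4 → Phase X V₁ V₂ V₃ → Phase X V₁ V₂ V₃
  | 0, p => (p.1, 0, 0, 0)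
  | 1, p => (0, p.2.1, 0, 0)
  | 2, p => (0, 0, p.2.2.1, 0)
  | 3, p => (0, 0, 0, p.2.2.2)

lemma sum_component (v : Phase X V₁ V₂ V₃) : ∑ j, component j v = v := by
  simp [Fin.sum_univ_four, component]

end Components

section Brackets

variable {X V₁ V₂ V₃ : Type*}
  [NormedAddCommGroup V₁] [NormedAddCommGroup V₂] [NormedAddCommGroup V₃]

/-- The Japanese brackets `⟨(ξ', ξ'', ξ''')⟩`, `⟨(ξ'', ξ''')⟩`, `⟨ξ'''⟩` for the indices `1, 2, 3`;
the index `0` of the base variable gets the bracket `1`. -/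
noncomputable def bracket : Fin 4 → Phase X V₁ V₂ V₃ → ℝ
  | 0, _ => 1
  | 1, p => √(1 + ‖p.2.1‖ ^ 2 + ‖p.2.2.1‖ ^ 2 + ‖p.2.2.2‖ ^ 2)
  | 2, p => √(1 + ‖p.2.2.1‖ ^ 2 + ‖p.2.2.2‖ ^ 2)
  | 3, p => √(1 + ‖p.2.2.2‖ ^ 2)

lemma bracket_anti (p : Phase X V₁ V₂ V₃) {i j : Fin 4} (hi : i ≠ 0) (hij : i ≤ j) :
    bracket j p ≤ bracket i p := by
  fin_cases i <;> fin_cases j <;> first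
    | exact absurd rfl hi
    | exact absurd hij (by decide)
    | exact Real.sqrt_le_sqrt (by linarith [sq_nonneg ‖p.2.1‖, sq_nonneg ‖p.2.2.1‖])

lemma one_le_bracket (j : Fin 4) (p : Phase X V₁ V₂ V₃) : 1 ≤ bracket j p := by
  have := sq_nonneg ‖p.2.1‖
  have := sq_nonneg ‖p.2.2.1‖
  have := sq_nonneg ‖p.2.2.2‖
  fin_cases j
  · exact le_rfl
  all_goals exact Real.one_le_sqrt.2 (by linarith)

lemma bracket_pos (j : Fin 4) (p : Phase X V₁ V₂ V₃) : 0 < bracket j p :=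
  one_pos.trans_le (one_le_bracket j p)

/-- The weight `⟨(ξ', ξ'', ξ''')⟩ ^ M₁ ⟨(ξ'', ξ''')⟩ ^ M₂ ⟨ξ'''⟩ ^ M₃`. -/
noncomputable def weight (M₁ M₂ M₃ : ℝ) (p : Phase X V₁ V₂ V₃) : ℝ :=
  bracket 1 p ^ M₁ * bracket 2 p ^ M₂ * bracket 3 p ^ M₃

lemma weight_nonneg (M₁ M₂ M₃ : ℝ) (p : Phase X V₁ V₂ V₃) : 0 ≤ weight M₁ M₂ M₃ p := by
  have (j : Fin 4) (M : ℝ) : 0 ≤ bracket j p ^ M := Real.rpow_nonneg (bracket_pos j p).le M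
  exact mul_nonneg (mul_nonneg (this _ _) (this _ _)) (this _ _)

lemma rpow_le_rpow_abs_mul_rpow {x y c : ℝ} (hx : 0 < x) (hy : 0 < y) (hc : 0 < c)
    (hxy : x ≤ c * y) (hyx : y ≤ c * x) (M : ℝ) : x ^ M ≤ c ^ |M| * y ^ M := by
  rcases le_total 0 M with hM | hM
  · calc x ^ M ≤ (c * y) ^ M := Real.rpow_le_rpow hx.le hxy hM
      _ = c ^ |M| * y ^ M := by rw [Real.mul_rpow hc.le hy.le, abs_of_nonneg hM]
  · calc x ^ M = c ^ |M| * (c * x) ^ M := by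
          rw [Real.mul_rpow hc.le hx.le, abs_of_nonpos hM, ← mul_assoc,
            ← Real.rpow_add hc, neg_add_cancel, Real.rpow_zero, one_mul]
      _ ≤ c ^ |M| * y ^ M := by
          gcongr ?_ * ?_
          exact Real.rpow_le_rpow_of_nonpos hy hyx hM

lemma weight_le_mul_weight (M₁ M₂ M₃ : ℝ) {c : ℝ} (hc : 0 < c) {p q : Phase X V₁ V₂ V₃}
    (hqp : ∀ j, bracket j q ≤ c * bracket j p) (hpq : ∀ j, bracket j p ≤ c * bracket j q) :
    weight M₁ M₂ M₃ q ≤ c ^ |M₁| * c ^ |M₂| * c ^ |M₃| * weight M₁ M₂ M₃ p := by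
  have factor (j : Fin 4) (M : ℝ) : bracket j q ^ M ≤ c ^ |M| * bracket j p ^ M :=
    rpow_le_rpow_abs_mul_rpow (bracket_pos j q) (bracket_pos j p) hc (hqp j) (hpq j) M
  have nonneg (j : Fin 4) (M : ℝ) : 0 ≤ bracket j q ^ M := Real.rpow_nonneg (bracket_pos j q).le M
  calc weight M₁ M₂ M₃ q
      ≤ c ^ |M₁| * bracket 1 p ^ M₁ * (c ^ |M₂| * bracket 2 p ^ M₂) *
          (c ^ |M₃| * bracket 3 p ^ M₃) :=
        mul_le_mul (mul_le_mul (factor 1 M₁) (factor 2 M₂) (nonneg _ _)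
          ((nonneg _ _).trans (factor 1 M₁))) (factor 3 M₃) (nonneg _ _)
          (mul_nonneg ((nonneg _ _).trans (factor 1 M₁)) ((nonneg _ _).trans (factor 2 M₂)))
    _ = c ^ |M₁| * c ^ |M₂| * c ^ |M₃| * weight M₁ M₂ M₃ p := by unfold weight; ring

end Brackets

section Gauge

variable {X V₁ V₂ V₃ : Type*} [NormedAddCommGroup X] [NormedSpace ℝ X]
  [NormedAddCommGroup V₁] [NormedSpace ℝ V₁] [NormedAddCommGroup V₂] [NormedSpace ℝ V₂]
  [NormedAddCommGroup V₃] [NormedSpace ℝ V₃]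

/-- The linear truncations: `level 0` keeps `x`, and `level j` for `j = 1, 2, 3` keeps the
frequencies of index at least `j`. The flag consists of the kernels of `level 3` and `level 2`. -/
noncomputable def level : Fin 4 → Phase X V₁ V₂ V₃ →L[ℝ] Phase X V₁ V₂ V₃
  | 0 => (ContinuousLinearMap.id ℝ X).prodMap 0
  | 1 => (0 : X →L[ℝ] X).prodMap (.id ℝ _)
  | 2 => (0 : X →L[ℝ] X).prodMap ((0 : V₁ →L[ℝ] V₁).prodMap (.id ℝ _))
  | 3 => (0 : X →L[ℝ] X).prodMap ((0 : V₁ →L[ℝ] V₁).prodMap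
      ((0 : V₂ →L[ℝ] V₂).prodMap (.id ℝ _)))

lemma level_level (j : Fin 4) (v : Phase X V₁ V₂ V₃) : level j (level j v) = level j v := by
  fin_cases j <;> rfl

lemma level_component (i j : Fin 4) (v : Phase X V₁ V₂ V₃) :
    level i (component j v) = if i = j ∨ i ≠ 0 ∧ i ≤ j then component j v else 0 := by
  fin_cases i <;> fin_cases j <;> rfl

lemma norm_level_zero (v : Phase X V₁ V₂ V₃) : ‖level 0 v‖ = ‖v.1‖ :=
  max_eq_left (by simp [level])

lemma norm_level_one (v : Phase X V₁ V₂ V₃) :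
    ‖level 1 v‖ = max ‖v.2.1‖ (max ‖v.2.2.1‖ ‖v.2.2.2‖) := by
  change max ‖(0 : X)‖ (max ‖v.2.1‖ (max ‖v.2.2.1‖ ‖v.2.2.2‖)) = _
  simp

lemma norm_level_two (v : Phase X V₁ V₂ V₃) :
    ‖level 2 v‖ = max ‖v.2.2.1‖ ‖v.2.2.2‖ := by
  change max ‖(0 : X)‖ (max ‖(0 : V₁)‖ (max ‖v.2.2.1‖ ‖v.2.2.2‖)) = _
  simp

lemma norm_level_three (v : Phase X V₁ V₂ V₃) : ‖level 3 v‖ = ‖v.2.2.2‖ := by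
  change max ‖(0 : X)‖ (max ‖(0 : V₁)‖ (max ‖(0 : V₂)‖ ‖v.2.2.2‖)) = _
  simp

lemma norm_component_le_norm_level (j : Fin 4) (v : Phase X V₁ V₂ V₃) :
    ‖component j v‖ ≤ ‖level j v‖ := by
  fin_cases j <;>
    simp [norm_level_zero, norm_level_one, norm_level_two, norm_level_three, component]

lemma norm_level_le (j : Fin 4) (v : Phase X V₁ V₂ V₃) : ‖level j v‖ ≤ ‖v‖ := by
  fin_cases j
  · exact (norm_level_zero v).trans_le (norm_fst_le v)
  · exact (norm_level_one v).trans_le (norm_snd_le v)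
  · exact (norm_level_two v).trans_le ((norm_snd_le v.2).trans (norm_snd_le v))
  · exact (norm_level_three v).trans_le
      ((norm_snd_le v.2.2).trans ((norm_snd_le v.2).trans (norm_snd_le v)))

lemma norm_level_le_bracket {j : Fin 4} (hj : j ≠ 0) (p : Phase X V₁ V₂ V₃) :
    ‖level j p‖ ≤ bracket j p := by
  have := sq_nonneg ‖p.2.1‖
  have := sq_nonneg ‖p.2.2.1‖
  have := sq_nonneg ‖p.2.2.2‖
  fin_cases j
  · exact absurd rfl hj
  · exact (norm_level_one p).trans_le <| max_le (Real.le_sqrt_of_sq_le (by linarith)) <|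
      max_le (Real.le_sqrt_of_sq_le (by linarith)) (Real.le_sqrt_of_sq_le (by linarith))
  · exact (norm_level_two p).trans_le <|
      max_le (Real.le_sqrt_of_sq_le (by linarith)) (Real.le_sqrt_of_sq_le (by linarith))
  · exact (norm_level_three p).trans_le (Real.le_sqrt_of_sq_le (by linarith))

lemma bracket_le_one_add_norm_level (j : Fin 4) (p : Phase X V₁ V₂ V₃) :
    bracket j p ≤ 1 + 3 * ‖level j p‖ := by
  have sqrt_le {a b c r : ℝ} (ha : 0 ≤ a ∧ a ≤ r) (hb : 0 ≤ b ∧ b ≤ r) (hc : 0 ≤ c ∧ c ≤ r) :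
      √(1 + a ^ 2 + b ^ 2 + c ^ 2) ≤ 1 + 3 * r :=
    Real.sqrt_le_iff.2 ⟨by linarith, by nlinarith⟩
  have zero_mem : (0 : ℝ) ≤ 0 ∧ 0 ≤ ‖level j p‖ := ⟨le_rfl, norm_nonneg _⟩
  fin_cases j
  · simp [bracket]
  · exact sqrt_le ⟨norm_nonneg _, by simp [norm_level_one]⟩
      ⟨norm_nonneg _, by simp [norm_level_one]⟩ ⟨norm_nonneg _, by simp [norm_level_one]⟩
  · simpa [bracket] using sqrt_le zero_mem
      ⟨norm_nonneg p.2.2.1, by simp [norm_level_two]⟩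
      ⟨norm_nonneg p.2.2.2, by simp [norm_level_two]⟩
  · simpa [bracket] using sqrt_le zero_mem zero_mem
      ⟨norm_nonneg p.2.2.2, by simp [norm_level_three]⟩

/-- The point-dependent norm `g_p` on directions. As the brackets decrease in `j = 1, 2, 3`, it is
`max (‖v_x‖, ‖v'‖ / ⟨(ξ', ξ'', ξ''')⟩, ‖v''‖ / ⟨(ξ'', ξ''')⟩, ‖v'''‖ / ⟨ξ'''⟩)`. -/
noncomputable def gauge (p v : Phase X V₁ V₂ V₃) : ℝ :=
  ‖fun j => (bracket j p)⁻¹ • level j v‖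

lemma gauge_nonneg (p v : Phase X V₁ V₂ V₃) : 0 ≤ gauge p v := norm_nonneg _

lemma gauge_le_iff {p v : Phase X V₁ V₂ V₃} {r : ℝ} (hr : 0 ≤ r) :
    gauge p v ≤ r ↔ ∀ j, ‖level j v‖ ≤ bracket j p * r := by
  refine (pi_norm_le_iff_of_nonneg hr).trans (forall_congr' fun j => ?_)
  have := bracket_pos j p
  rw [norm_smul, norm_inv, Real.norm_of_nonneg this.le, inv_mul_le_iff₀ this]

lemma norm_level_le_bracket_mul_gauge (j : Fin 4) (p v : Phase X V₁ V₂ V₃) :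
    ‖level j v‖ ≤ bracket j p * gauge p v :=
  (gauge_le_iff (gauge_nonneg p v)).1 le_rfl j

lemma gauge_component (p v : Phase X V₁ V₂ V₃) (j : Fin 4) :
    gauge p (component j v) = (bracket j p)⁻¹ * ‖component j v‖ := by
  have hj := bracket_pos j p
  apply le_antisymm
  · have hr : 0 ≤ (bracket j p)⁻¹ * ‖component j v‖ := by positivity
    refine (gauge_le_iff hr).2 fun i => ?_
    have bracket_le (hij : i = j ∨ i ≠ 0 ∧ i ≤ j) : bracket j p ≤ bracket i p :=
      hij.elim (fun h => h ▸ le_rfl) fun h => bracket_anti p h.1 h.2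
    rw [level_component]
    split_ifs with hij
    · calc ‖component j v‖ = bracket j p * ((bracket j p)⁻¹ * ‖component j v‖) := by field_simp
        _ ≤ bracket i p * ((bracket j p)⁻¹ * ‖component j v‖) := by gcongr; exact bracket_le hij
    · simpa using mul_nonneg (bracket_pos i p).le hr
  · rw [inv_mul_le_iff₀ hj]
    simpa [level_component] using norm_level_le_bracket_mul_gauge j p (component j v)

lemma gauge_component_le (p : Phase X V₁ V₂ V₃) (j : Fin 4) (v : Phase X V₁ V₂ V₃) :
    gauge p (component j v) ≤ gauge p v := by
  rw [gauge_component, inv_mul_le_iff₀ (bracket_pos j p)]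
  exact (norm_component_le_norm_level j v).trans (norm_level_le_bracket_mul_gauge j p v)

section LinearChange

variable {S : Phase X V₁ V₂ V₃ →L[ℝ] Phase X V₁ V₂ V₃}

lemma norm_level_map_le {j : Fin 4} (hS : ∀ p, level j p = 0 → level j (S p) = 0)
    (p : Phase X V₁ V₂ V₃) : ‖level j (S p)‖ ≤ ‖S‖ * ‖level j p‖ := by
  have truncated : level j (S p) = level j (S (level j p)) := by
    rw [← sub_eq_zero, ← map_sub, ← map_sub]
    exact hS _ (by rw [map_sub, level_level, sub_self])
  calc ‖level j (S p)‖ ≤ ‖S (level j p)‖ := truncated ▸ norm_level_le j _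
    _ ≤ ‖S‖ * ‖level j p‖ := S.le_opNorm _

lemma bracket_map_le {j : Fin 4} (hS : ∀ p, level j p = 0 → level j (S p) = 0)
    (p : Phase X V₁ V₂ V₃) : bracket j (S p) ≤ (1 + 3 * ‖S‖) * bracket j p := by
  have hb := one_le_bracket j p
  rcases eq_or_ne j 0 with rfl | hj
  · simp [bracket]
  · calc bracket j (S p) ≤ 1 + 3 * ‖level j (S p)‖ := bracket_le_one_add_norm_level j _
      _ ≤ 1 + 3 * (‖S‖ * bracket j p) := by
          gcongr
          exact (norm_level_map_le hS p).trans (by gcongr; exact norm_level_le_bracket hj p)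
      _ ≤ (1 + 3 * ‖S‖) * bracket j p := by linarith

lemma gauge_map_map_le {c : ℝ} (hS : ∀ j p, level j p = 0 → level j (S p) = 0)
    {p : Phase X V₁ V₂ V₃} (hc : 0 ≤ c) (hp : ∀ j, bracket j p ≤ c * bracket j (S p))
    (v : Phase X V₁ V₂ V₃) : gauge (S p) (S v) ≤ ‖S‖ * c * gauge p v := by
  have hv := gauge_nonneg p v
  refine (gauge_le_iff (by positivity)).2 fun j => ?_
  calc ‖level j (S v)‖ ≤ ‖S‖ * ‖level j v‖ := norm_level_map_le (hS j) v
    _ ≤ ‖S‖ * (bracket j p * gauge p v) := by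
        gcongr; exact norm_level_le_bracket_mul_gauge j p v
    _ ≤ ‖S‖ * (c * bracket j (S p) * gauge p v) := by gcongr; exact hp j
    _ = bracket j (S p) * (‖S‖ * c * gauge p v) := by ring

end LinearChange

end Gauge

section MixedDerivatives

variable {X V₁ V₂ V₃ F : Type*} [NormedAddCommGroup X] [NormedSpace ℝ X]
  [NormedAddCommGroup V₁] [NormedSpace ℝ V₁] [NormedAddCommGroup V₂] [NormedSpace ℝ V₂]
  [NormedAddCommGroup V₃] [NormedSpace ℝ V₃] [NormedAddCommGroup F] [NormedSpace ℝ F]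

/-- The inclusion of the space of the base variable `x`. -/
noncomputable def inclusion₀ : X →L[ℝ] Phase X V₁ V₂ V₃ := .inl ℝ X _

/-- The inclusion of the space of the frequency `ξ'`. -/
noncomputable def inclusion₁ : V₁ →L[ℝ] Phase X V₁ V₂ V₃ :=
  (ContinuousLinearMap.inr ℝ X _).comp (.inl ℝ V₁ _)

/-- The inclusion of the space of the frequency `ξ''`. -/
noncomputable def inclusion₂ : V₂ →L[ℝ] Phase X V₁ V₂ V₃ :=
  (ContinuousLinearMap.inr ℝ X _).comp ((ContinuousLinearMap.inr ℝ V₁ _).comp (.inl ℝ V₂ V₃))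

/-- The inclusion of the space of the frequency `ξ'''`. -/
noncomputable def inclusion₃ : V₃ →L[ℝ] Phase X V₁ V₂ V₃ :=
  (ContinuousLinearMap.inr ℝ X _).comp ((ContinuousLinearMap.inr ℝ V₁ _).comp (.inr ℝ V₂ V₃))

lemma gauge_inclusion₀ (p : Phase X V₁ V₂ V₃) (v : X) : gauge p (inclusion₀ v) = ‖v‖ :=
  (gauge_component p (v, 0, 0, 0) 0).trans (by simp [component, bracket])

lemma gauge_inclusion₁ (p : Phase X V₁ V₂ V₃) (v : V₁) :
    gauge p (inclusion₁ v) = (bracket 1 p)⁻¹ * ‖v‖ :=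
  (gauge_component p (0, v, 0, 0) 1).trans (by simp [component])

lemma gauge_inclusion₂ (p : Phase X V₁ V₂ V₃) (v : V₂) :
    gauge p (inclusion₂ v) = (bracket 2 p)⁻¹ * ‖v‖ :=
  (gauge_component p (0, 0, v, 0) 2).trans (by simp [component])

lemma gauge_inclusion₃ (p : Phase X V₁ V₂ V₃) (v : V₃) :
    gauge p (inclusion₃ v) = (bracket 3 p)⁻¹ * ‖v‖ :=
  (gauge_component p (0, 0, 0, v) 3).trans (by simp [component])

/-- The values of `k`-th derivatives of `F`-valued maps on `V`. Nesting this abbreviation rather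
than the arrow type makes the instances of the inner spaces come from their norms. -/
abbrev FDerivSpace (k : ℕ) (V F : Type*) [NormedAddCommGroup V] [NormedSpace ℝ V]
    [NormedAddCommGroup F] [NormedSpace ℝ F] := V [×k]→L[ℝ] F

/-- The mixed derivative `∂_x^γ ∂_{ξ'}^α ∂_{ξ''}^β ∂_{ξ'''}^η h`, all derivatives of given orders
being collected in one multilinear map. -/
noncomputable def mixedFDeriv (γ α β η : ℕ) (h : Phase X V₁ V₂ V₃ → F) :
    Phase X V₁ V₂ V₃ → FDerivSpace γ X (FDerivSpace α V₁ (FDerivSpace β V₂ (FDerivSpace η V₃ F))) :=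
  partialFDeriv inclusion₀ γ <| partialFDeriv inclusion₁ α <|
    partialFDeriv inclusion₂ β <| partialFDeriv inclusion₃ η h

/-- Directions in the four factors, listed factor by factor. -/
noncomputable def blockDirections {γ α β η : ℕ} (u₀ : Fin γ → X) (u₁ : Fin α → V₁)
    (u₂ : Fin β → V₂) (u₃ : Fin η → V₃) : List (Phase X V₁ V₂ V₃) :=
  (List.ofFn fun i => inclusion₀ (u₀ i)) ++ ((List.ofFn fun i => inclusion₁ (u₁ i)) ++
    ((List.ofFn fun i => inclusion₂ (u₂ i)) ++ List.ofFn fun i => inclusion₃ (u₃ i)))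

variable {h : Phase X V₁ V₂ V₃ → F} {γ α β η : ℕ}

lemma iteratedFDeriv_nested_eq_mixedFDeriv (hh : ContDiff ℝ ∞ h)
    (x : X) (ξ' : V₁) (ξ'' : V₂) (ξ''' : V₃) :
    iteratedFDeriv ℝ γ (fun x => iteratedFDeriv ℝ α (fun ξ' => iteratedFDeriv ℝ β (fun ξ'' =>
      iteratedFDeriv ℝ η (fun ξ''' => h (x, ξ', ξ'', ξ''')) ξ''') ξ'') ξ') x =
      mixedFDeriv γ α β η h (x, ξ', ξ'', ξ''') := by
  have h₃ := contDiff_partialFDeriv hh inclusion₃ η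
  have h₂ := contDiff_partialFDeriv h₃ inclusion₂ β
  have h₁ := contDiff_partialFDeriv h₂ inclusion₁ α
  have d₃ x ξ' ξ'' ξ''' := iteratedFDeriv_comp_add_eq_partialFDeriv hh inclusion₃ η
    (x, ξ', ξ'', 0) ξ'''
  have d₂ x ξ' ξ'' ξ''' := iteratedFDeriv_comp_add_eq_partialFDeriv h₃ inclusion₂ β
    (x, ξ', 0, ξ''') ξ''
  have d₁ x ξ' ξ'' ξ''' := iteratedFDeriv_comp_add_eq_partialFDeriv h₂ inclusion₁ α
    (x, 0, ξ'', ξ''') ξ'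
  have d₀ := iteratedFDeriv_comp_add_eq_partialFDeriv h₁ inclusion₀ γ (0, ξ', ξ'', ξ''') x
  simp only [inclusion₀, inclusion₁, inclusion₂, inclusion₃, ContinuousLinearMap.comp_apply,
    ContinuousLinearMap.inl_apply, ContinuousLinearMap.inr_apply, Prod.mk_add_mk, add_zero,
    zero_add] at d₀ d₁ d₂ d₃
  simp only [d₃, d₂, d₁, d₀]
  rfl

lemma mixedFDeriv_apply (hh : ContDiff ℝ ∞ h) (p : Phase X V₁ V₂ V₃)
    (u₀ : Fin γ → X) (u₁ : Fin α → V₁) (u₂ : Fin β → V₂) (u₃ : Fin η → V₃) :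
    mixedFDeriv γ α β η h p u₀ u₁ u₂ u₃ = listFDeriv (blockDirections u₀ u₁ u₂ u₃) h p := by
  have h₃ := contDiff_partialFDeriv hh inclusion₃ η
  have h₂ := contDiff_partialFDeriv h₃ inclusion₂ β
  have h₁ := contDiff_partialFDeriv h₂ inclusion₁ α
  have d₀ := listFDeriv_partialFDeriv_apply h₁ inclusion₀ γ [] p u₀
  simp only [listFDeriv, List.nil_append] at d₀
  rw [mixedFDeriv, d₀, listFDeriv_partialFDeriv_apply h₂, listFDeriv_partialFDeriv_apply h₃,
    listFDeriv_partialFDeriv_apply hh, blockDirections, List.append_assoc, List.append_assoc]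

lemma norm_mixedFDeriv_le_iff (hh : ContDiff ℝ ∞ h) (p : Phase X V₁ V₂ V₃) {B : ℝ} (hB : 0 ≤ B) :
    ‖mixedFDeriv γ α β η h p‖ ≤ B ↔
      ∀ (u₀ : Fin γ → X) (u₁ : Fin α → V₁) (u₂ : Fin β → V₂) (u₃ : Fin η → V₃),
        ‖listFDeriv (blockDirections u₀ u₁ u₂ u₃) h p‖ ≤
          B * (∏ i, ‖u₀ i‖) * (∏ i, ‖u₁ i‖) * (∏ i, ‖u₂ i‖) * ∏ i, ‖u₃ i‖ := by
  simp (disch := positivity) only [ContinuousMultilinearMap.opNorm_le_iff, mixedFDeriv_apply hh]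

lemma weight_mul_prod_gauge_blockDirections (M₁ M₂ M₃ : ℝ) (p : Phase X V₁ V₂ V₃)
    (u₀ : Fin γ → X) (u₁ : Fin α → V₁) (u₂ : Fin β → V₂) (u₃ : Fin η → V₃) :
    weight M₁ M₂ M₃ p * ((blockDirections u₀ u₁ u₂ u₃).map (gauge p)).prod =
      weight (M₁ - α) (M₂ - β) (M₃ - η) p *
        (∏ i, ‖u₀ i‖) * (∏ i, ‖u₁ i‖) * (∏ i, ‖u₂ i‖) * ∏ i, ‖u₃ i‖ := by
  have h₁ := bracket_pos 1 p
  have h₂ := bracket_pos 2 p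
  have h₃ := bracket_pos 3 p
  simp only [blockDirections, weight, List.map_append, List.map_ofFn, List.prod_append,
    List.prod_ofFn, Function.comp_apply, gauge_inclusion₀, gauge_inclusion₁, gauge_inclusion₂,
    gauge_inclusion₃, Finset.prod_mul_distrib, Finset.prod_const, Finset.card_univ,
    Fintype.card_fin, Real.rpow_sub h₁, Real.rpow_sub h₂, Real.rpow_sub h₃, Real.rpow_natCast,
    inv_pow]
  field_simp

/-- The lists which, up to order, consist of `γ`, `α`, `β` and `η` directions in the respective
factors. -/
def homogeneousLists (X V₁ V₂ V₃ : Type*) [NormedAddCommGroup X] [NormedSpace ℝ X]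
    [NormedAddCommGroup V₁] [NormedSpace ℝ V₁] [NormedAddCommGroup V₂] [NormedSpace ℝ V₂]
    [NormedAddCommGroup V₃] [NormedSpace ℝ V₃] :
    ℕ × ℕ × ℕ × ℕ → Set (List (Phase X V₁ V₂ V₃))
  | (γ, α, β, η) => {L | ∃ (u₀ : Fin γ → X) (u₁ : Fin α → V₁) (u₂ : Fin β → V₂) (u₃ : Fin η → V₃),
      L.Perm (blockDirections u₀ u₁ u₂ u₃)}

lemma nil_mem_homogeneousLists : [] ∈ homogeneousLists X V₁ V₂ V₃ (0, 0, 0, 0) :=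
  ⟨0, 0, 0, 0, .nil⟩

lemma component_cons_mem_homogeneousLists (κ : ℕ × ℕ × ℕ × ℕ) (j : Fin 4) :
    ∃ κ', ∀ L ∈ homogeneousLists X V₁ V₂ V₃ κ, ∀ v,
      component j v :: L ∈ homogeneousLists X V₁ V₂ V₃ κ' := by
  obtain ⟨γ, α, β, η⟩ := κ
  fin_cases j
  · refine ⟨(γ + 1, α, β, η), ?_⟩
    rintro L ⟨u₀, u₁, u₂, u₃, hL⟩ v
    refine ⟨Fin.cons v.1 u₀, u₁, u₂, u₃, (hL.cons _).trans ?_⟩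
    simp only [blockDirections, List.ofFn_succ, Fin.cons_zero, Fin.cons_succ]
    rfl
  · refine ⟨(γ, α + 1, β, η), ?_⟩
    rintro L ⟨u₀, u₁, u₂, u₃, hL⟩ v
    refine ⟨u₀, Fin.cons v.2.1 u₁, u₂, u₃, (hL.cons _).trans ?_⟩
    simp only [blockDirections, List.ofFn_succ, Fin.cons_zero, Fin.cons_succ]
    exact List.perm_middle.symm
  · refine ⟨(γ, α, β + 1, η), ?_⟩
    rintro L ⟨u₀, u₁, u₂, u₃, hL⟩ v
    refine ⟨u₀, u₁, Fin.cons v.2.2.1 u₂, u₃, (hL.cons _).trans ?_⟩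
    simp only [blockDirections, List.ofFn_succ, Fin.cons_zero, Fin.cons_succ]
    exact List.perm_middle.symm.trans (List.perm_middle.symm.append_left _)
  · refine ⟨(γ, α, β, η + 1), ?_⟩
    rintro L ⟨u₀, u₁, u₂, u₃, hL⟩ v
    refine ⟨u₀, u₁, u₂, Fin.cons v.2.2.2 u₃, (hL.cons _).trans ?_⟩
    simp only [blockDirections, List.ofFn_succ, Fin.cons_zero, Fin.cons_succ]
    exact List.perm_middle.symm.trans
      ((List.perm_middle.symm.trans (List.perm_middle.symm.append_left _)).append_left _)

lemma boundedAlong_homogeneousLists_iff (hh : ContDiff ℝ ∞ h) (M₁ M₂ M₃ : ℝ) :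
    BoundedAlong gauge (weight M₁ M₂ M₃) h (homogeneousLists X V₁ V₂ V₃ (γ, α, β, η)) ↔
      ∃ C, ∀ p, ‖mixedFDeriv γ α β η h p‖ ≤ C * weight (M₁ - α) (M₂ - β) (M₃ - η) p := by
  have mixed_le_iff {C : ℝ} (hC : 0 ≤ C) (p : Phase X V₁ V₂ V₃) :
      ‖mixedFDeriv γ α β η h p‖ ≤ C * weight (M₁ - α) (M₂ - β) (M₃ - η) p ↔
        ∀ (u₀ : Fin γ → X) (u₁ : Fin α → V₁) (u₂ : Fin β → V₂) (u₃ : Fin η → V₃),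
          ‖listFDeriv (blockDirections u₀ u₁ u₂ u₃) h p‖ ≤
            C * weight M₁ M₂ M₃ p * ((blockDirections u₀ u₁ u₂ u₃).map (gauge p)).prod := by
    simp only [norm_mixedFDeriv_le_iff hh p (mul_nonneg hC (weight_nonneg _ _ _ p)), mul_assoc C,
      weight_mul_prod_gauge_blockDirections]
  constructor
  · rintro ⟨C, hC, bound⟩
    exact ⟨C, fun p => (mixed_le_iff hC p).2 fun u₀ u₁ u₂ u₃ =>
      bound _ ⟨u₀, u₁, u₂, u₃, .refl _⟩ p⟩
  · rintro ⟨C, bound⟩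
    refine ⟨|C|, abs_nonneg C, ?_⟩
    rintro L ⟨u₀, u₁, u₂, u₃, hL⟩ p
    rw [listFDeriv_eq_of_perm hh hL, (hL.map (gauge p)).prod_eq]
    refine (mixed_le_iff (abs_nonneg C) p).1 ((bound p).trans ?_) u₀ u₁ u₂ u₃
    exact mul_le_mul_of_nonneg_right (le_abs_self C) (weight_nonneg _ _ _ p)

lemma boundedAlong_length_iff (hh : ContDiff ℝ ∞ h) (M₁ M₂ M₃ : ℝ) :
    (∀ k, BoundedAlong gauge (weight M₁ M₂ M₃) h {l | l.length = k}) ↔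
      ∀ κ, BoundedAlong gauge (weight M₁ M₂ M₃) h (homogeneousLists X V₁ V₂ V₃ κ) := by
  constructor
  · rintro H ⟨γ, α, β, η⟩
    refine (H (γ + (α + (β + η)))).mono ?_
    rintro L ⟨u₀, u₁, u₂, u₃, hL⟩
    simp [hL.length_eq, blockDirections]
  · intro H k
    refine (BoundedAlong.of_components hh (weight_nonneg _ _ _) gauge_nonneg sum_component
      gauge_component_le component_cons_mem_homogeneousLists H k (0, 0, 0, 0)).mono ?_
    exact fun l hl => ⟨l, hl, [], nil_mem_homogeneousLists, l.append_nil.symm⟩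

/-- Triple symbol-valued symbols of order `(M₁, M₂, M₃)`. The partial derivatives of given orders in
the four variables are collected in one nested Fréchet derivative instead of being indexed by
multi-indices. -/
structure IsTripleSymbol (M₁ M₂ M₃ : ℝ) (a : Phase X V₁ V₂ V₃ → F) : Prop where
  contDiff : ContDiff ℝ ∞ a
  estimate : ∀ γ α β η : ℕ, ∃ C : ℝ, ∀ x ξ' ξ'' ξ''',
    ‖iteratedFDeriv ℝ γ (fun x => iteratedFDeriv ℝ α (fun ξ' => iteratedFDeriv ℝ β (fun ξ'' =>
      iteratedFDeriv ℝ η (fun ξ''' => a (x, ξ', ξ'', ξ''')) ξ''') ξ'') ξ') x‖ ≤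
      C * bracket 1 (x, ξ', ξ'', ξ''') ^ (M₁ - (α : ℝ)) *
        bracket 2 (x, ξ', ξ'', ξ''') ^ (M₂ - (β : ℝ)) *
        bracket 3 (x, ξ', ξ'', ξ''') ^ (M₃ - (η : ℝ))

lemma isTripleSymbol_iff_boundedAlong {M₁ M₂ M₃ : ℝ} {a : Phase X V₁ V₂ V₃ → F} :
    IsTripleSymbol M₁ M₂ M₃ a ↔ ContDiff ℝ ∞ a ∧
      ∀ k, BoundedAlong gauge (weight M₁ M₂ M₃) a {l | l.length = k} := by
  refine Iff.trans ⟨fun h => ⟨h.contDiff, h.estimate⟩, fun h => ⟨h.1, h.2⟩⟩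
    (and_congr_right fun ha => ?_)
  simp only [boundedAlong_length_iff ha, Prod.forall, boundedAlong_homogeneousLists_iff ha,
    iteratedFDeriv_nested_eq_mixedFDeriv ha, weight, mul_assoc]

end MixedDerivatives

section FlagPreservingChange

variable {X V₁ V₂ V₃ F : Type*} [NormedAddCommGroup X] [NormedSpace ℝ X]
  [NormedAddCommGroup V₁] [NormedSpace ℝ V₁] [NormedAddCommGroup V₂] [NormedSpace ℝ V₂]
  [NormedAddCommGroup V₃] [NormedSpace ℝ V₃] [NormedAddCommGroup F] [NormedSpace ℝ F]

lemma exists_bracket_comparison (S : Phase X V₁ V₂ V₃ ≃L[ℝ] Phase X V₁ V₂ V₃)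
    (hS : ∀ j p, level j (S p) = 0 ↔ level j p = 0) :
    ∃ c > 0, ∀ j p, bracket j (S p) ≤ c * bracket j p ∧ bracket j p ≤ c * bracket j (S p) := by
  let T : Phase X V₁ V₂ V₃ →L[ℝ] Phase X V₁ V₂ V₃ := S
  let U : Phase X V₁ V₂ V₃ →L[ℝ] Phase X V₁ V₂ V₃ := S.symm
  have hU (j : Fin 4) (p) (hp : level j p = 0) : level j (U p) = 0 :=
    (hS j (U p)).1 ((congrArg (level j) (S.apply_symm_apply p)).trans hp)
  have bracket_le (j : Fin 4) (p) : bracket j p ≤ (1 + 3 * ‖U‖) * bracket j (S p) :=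
    (congrArg (bracket j) (S.symm_apply_apply p)).symm.trans_le (bracket_map_le (hU j) (S p))
  refine ⟨max (1 + 3 * ‖T‖) (1 + 3 * ‖U‖), lt_max_of_lt_left (by positivity), fun j p => ⟨?_, ?_⟩⟩
  · exact (bracket_map_le (S := T) (fun p => (hS j p).2) p).trans
      (mul_le_mul_of_nonneg_right (le_max_left _ _) (bracket_pos j p).le)
  · exact (bracket_le j p).trans
      (mul_le_mul_of_nonneg_right (le_max_right _ _) (bracket_pos j (S p)).le)

lemma IsTripleSymbol.comp_continuousLinearEquiv {M₁ M₂ M₃ : ℝ} {a : Phase X V₁ V₂ V₃ → F}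
    (ha : IsTripleSymbol M₁ M₂ M₃ a) (S : Phase X V₁ V₂ V₃ ≃L[ℝ] Phase X V₁ V₂ V₃)
    (hS : ∀ j p, level j (S p) = 0 ↔ level j p = 0) :
    IsTripleSymbol M₁ M₂ M₃ fun p => a (S p) := by
  obtain ⟨ha_smooth, bound⟩ := isTripleSymbol_iff_boundedAlong.1 ha
  obtain ⟨c, hc, hbracket⟩ := exists_bracket_comparison S hS
  let T : Phase X V₁ V₂ V₃ →L[ℝ] Phase X V₁ V₂ V₃ := S
  have weight_le (p) : weight M₁ M₂ M₃ (T p) ≤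
      c ^ |M₁| * c ^ |M₂| * c ^ |M₃| * weight M₁ M₂ M₃ p :=
    weight_le_mul_weight M₁ M₂ M₃ hc (fun j => (hbracket j p).1) fun j => (hbracket j p).2
  have gauge_le (p v) : gauge (T p) (T v) ≤ ‖T‖ * c * gauge p v :=
    gauge_map_map_le (fun j p => (hS j p).2) hc.le (fun j => (hbracket j p).2) v
  exact isTripleSymbol_iff_boundedAlong.2 ⟨ha_smooth.comp T.contDiff, fun k =>
    (bound k).comp_continuousLinearMap ha_smooth (weight_nonneg M₁ M₂ M₃) gauge_nonneg
      (by positivity) (by positivity) weight_le gauge_le⟩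

lemma level_eq_zero_iff_of_image_eq (T : (V₁ × V₂ × V₃) ≃L[ℝ] (V₁ × V₂ × V₃))
    (hT1 : (fun p => T p) '' {p | p.2.1 = 0 ∧ p.2.2 = 0} = {p | p.2.1 = 0 ∧ p.2.2 = 0})
    (hT2 : (fun p => T p) '' {p | p.2.2 = 0} = {p | p.2.2 = 0})
    (j : Fin 4) (p : Phase X V₁ V₂ V₃) : level j (p.1, T p.2) = 0 ↔ level j p = 0 := by
  have mem_iff {s : Set (V₁ × V₂ × V₃)} (hs : (fun p => T p) '' s = s) : T p.2 ∈ s ↔ p.2 ∈ s := by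
    conv_lhs => rw [← hs]
    exact T.injective.mem_set_image
  fin_cases j
  · simp [level, Prod.ext_iff]
  · simp [level, Prod.ext_iff]
  · simpa [level, Prod.ext_iff] using mem_iff hT1
  · simpa [level, Prod.ext_iff] using mem_iff hT2

end FlagPreservingChange

end TripleSymbol

theorem stmt16_general {X V₁ V₂ V₃ F : Type*} [NormedAddCommGroup X] [NormedSpace ℝ X]
    [NormedAddCommGroup V₁] [NormedSpace ℝ V₁] [NormedAddCommGroup V₂] [NormedSpace ℝ V₂]
    [NormedAddCommGroup V₃] [NormedSpace ℝ V₃] [NormedAddCommGroup F] [NormedSpace ℝ F]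
    (T : (V₁ × V₂ × V₃) ≃L[ℝ] (V₁ × V₂ × V₃))
    (hT1 : (fun p => T p) '' {p | p.2.1 = 0 ∧ p.2.2 = 0} = {p | p.2.1 = 0 ∧ p.2.2 = 0})
    (hT2 : (fun p => T p) '' {p | p.2.2 = 0} = {p | p.2.2 = 0})
    {M₁ M₂ M₃ : ℝ} {a : X × V₁ × V₂ × V₃ → F} (ha : TripleSymbol.IsTripleSymbol M₁ M₂ M₃ a) :
    TripleSymbol.IsTripleSymbol M₁ M₂ M₃ fun p => a (p.1, T p.2) :=
  ha.comp_continuousLinearEquiv ((ContinuousLinearEquiv.refl ℝ X).prodCongr T)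
    (TripleSymbol.level_eq_zero_iff_of_image_eq T hT1 hT2)

/-- The class of triple symbol-valued symbols of order `(M₁,M₂,M₃)` is invariant
under invertible linear frequency changes preserving the flag
`ℝ^{d₁}×{0}×{0} ⊆ ℝ^{d₁}×ℝ^{d₂}×{0}`. -/
theorem stmt16 (d₁ d₂ d₃ : ℕ) (hd₁ : 1 ≤ d₁) (hd₂ : 1 ≤ d₂) (hd₃ : 1 ≤ d₃)
    (T : (EuclideanSpace ℝ (Fin d₁) × EuclideanSpace ℝ (Fin d₂) ×
        EuclideanSpace ℝ (Fin d₃)) ≃ₗ[ℝ]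
      (EuclideanSpace ℝ (Fin d₁) × EuclideanSpace ℝ (Fin d₂) ×
        EuclideanSpace ℝ (Fin d₃)))
    (hT1 : (fun p => T p) '' {p | p.2.1 = 0 ∧ p.2.2 = 0} = {p | p.2.1 = 0 ∧ p.2.2 = 0})
    (hT2 : (fun p => T p) '' {p | p.2.2 = 0} = {p | p.2.2 = 0})
    (n : ℕ) (hn : 1 ≤ n) (M₁ M₂ M₃ : ℝ)
    (a : EuclideanSpace ℝ (Fin n) → EuclideanSpace ℝ (Fin d₁) →
      EuclideanSpace ℝ (Fin d₂) → EuclideanSpace ℝ (Fin d₃) → ℂ)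
    (ha_smooth : ContDiff ℝ (⊤ : ℕ∞)
      (fun p : EuclideanSpace ℝ (Fin n) × EuclideanSpace ℝ (Fin d₁) ×
          EuclideanSpace ℝ (Fin d₂) × EuclideanSpace ℝ (Fin d₃) =>
        a p.1 p.2.1 p.2.2.1 p.2.2.2))
    (ha : ∀ γ α β η : ℕ, ∃ C : ℝ, ∀ x ξ' ξ'' ξ''',
      ‖iteratedFDeriv ℝ γ (fun x => iteratedFDeriv ℝ α (fun ξ' =>
          iteratedFDeriv ℝ β (fun ξ'' => iteratedFDeriv ℝ η (fun ξ''' =>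
            a x ξ' ξ'' ξ''') ξ''') ξ'') ξ') x‖ ≤
        C * jap3 ξ' ξ'' ξ''' ^ (M₁ - (α : ℝ)) * jap2 ξ'' ξ''' ^ (M₂ - (β : ℝ)) *
          jap ξ''' ^ (M₃ - (η : ℝ))) :
    ∀ γ α β η : ℕ, ∃ C' : ℝ, ∀ x ξ' ξ'' ξ''',
      ‖iteratedFDeriv ℝ γ (fun x => iteratedFDeriv ℝ α (fun ξ' =>
          iteratedFDeriv ℝ β (fun ξ'' => iteratedFDeriv ℝ η (fun ξ''' =>
            a x (T (ξ', ξ'', ξ''')).1 (T (ξ', ξ'', ξ''')).2.1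
              (T (ξ', ξ'', ξ''')).2.2) ξ''') ξ'') ξ') x‖ ≤
        C' * jap3 ξ' ξ'' ξ''' ^ (M₁ - (α : ℝ)) * jap2 ξ'' ξ''' ^ (M₂ - (β : ℝ)) *
          jap ξ''' ^ (M₃ - (η : ℝ)) :=
  (stmt16_general T.toContinuousLinearEquiv hT1 hT2
    (a := fun p => a p.1 p.2.1 p.2.2.1 p.2.2.2) ⟨ha_smooth, ha⟩).estimate
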